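/- Let m be an atom mapping and η a most general unifier for m whose image is disjoint from the image of ω. Let h be a homomorphism (mapping every constant and null to itself) that is also a unifier for m. Then there exists a function τ: C ∪ N → C ∪ N such that h ⊆ τ ∘ (ηω), i.e., h(t) = τ(tηω) for every term t on which h is defined. -/

import Mathlib

/-! Common formalization of existential rules, homomorphisms, substitutions,
unifiers, rule applications, positive reliances and restraints. -/

/-- Terms: variables, constants, labelled nulls (each indexed by a natural number). -/
inductive Term where
  | var : ℕ → Term
  | const : ℕ → Term
  | null : ℕ → Term
deriving DecidableEq

namespace Term
def isVar : Term → Prop | var _ => True | _ => False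
def isConst : Term → Prop | const _ => True | _ => False
def isNull : Term → Prop | null _ => True | _ => False
end Term

/-- An atom is a predicate name applied to a list of terms (arity = list length). -/
structure Atom where
  pred : ℕ
  args : List Term
deriving DecidableEq

/-- Applying a function on terms to an atom, term-wise. -/
def Atom.map (f : Term → Term) (a : Atom) : Atom := ⟨a.pred, a.args.map f⟩

/-- Applying a function on terms to a set of atoms. -/
def mapSet (f : Term → Term) (A : Set Atom) : Set Atom := (Atom.map f) '' A

/-- The terms occurring in a set of atoms. -/
def termsOf (A : Set Atom) : Set Term := {t | ∃ a ∈ A, t ∈ a.args}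

/-- An interpretation is a set of atoms containing no variables. -/
def Interp (I : Set Atom) : Prop := ∀ t ∈ termsOf I, ¬ t.isVar

/-- A homomorphism from the atom set `A` to `I`: it fixes all constants and maps
every atom of `A` into `I`. -/
def isHom (h : Term → Term) (A I : Set Atom) : Prop :=
  (∀ c : ℕ, h (.const c) = .const c) ∧ ∀ a ∈ A, a.map h ∈ I

/-- A strong homomorphism additionally reflects atoms (over the terms of `A`). -/
def isStrongHom (h : Term → Term) (A I : Set Atom) : Prop :=
  isHom h A I ∧ ∀ a : Atom, (∀ t ∈ a.args, t ∈ termsOf A) → a.map h ∈ I → a ∈ A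

/-- A substitution fixes all constants and nulls. -/
def isSubst (θ : Term → Term) : Prop :=
  (∀ c : ℕ, θ (.const c) = .const c) ∧ (∀ n : ℕ, θ (.null n) = .null n)

/-- Atom mappings are partial functions on atoms. -/
def amDom (m : Atom → Option Atom) : Set Atom := {a | (m a).isSome}
def amRan (m : Atom → Option Atom) : Set Atom := {b | ∃ a, m a = some b}
def amAtoms (m : Atom → Option Atom) : Set Atom := amDom m ∪ amRan m

/-- θ is a unifier for the atom mapping m. -/
def isUnifier (θ : Term → Term) (m : Atom → Option Atom) : Prop :=
  isSubst θ ∧ ∀ a b : Atom, m a = some b → a.map θ = b.map θ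

/-- μ is a most general unifier for m. -/
def isMGU (μ : Term → Term) (m : Atom → Option Atom) : Prop :=
  isUnifier μ m ∧ ∀ ν, isUnifier ν m → ∃ σ, isSubst σ ∧ ∀ t, σ (μ t) = ν t

/-- An existential rule, given by its body and head (finite sets of atoms).
The universally quantified variables are those occurring in the body;
the existentially quantified ones are the head variables not occurring in the body. -/
structure Rule where
  body : Finset Atom
  head : Finset Atom

/-- The variables occurring in a set of atoms. -/
def varsOf (A : Set Atom) : Set Term := {t ∈ termsOf A | t.isVar}

def Rule.uvars (ρ : Rule) : Set Term := varsOf ↑ρ.body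
def Rule.evars (ρ : Rule) : Set Term := varsOf ↑ρ.head \ varsOf ↑ρ.body
def Rule.frontier (ρ : Rule) : Set Term := varsOf ↑ρ.body ∩ varsOf ↑ρ.head
def Rule.terms (ρ : Rule) : Set Term := termsOf ((↑ρ.body : Set Atom) ∪ ↑ρ.head)

/-- Rules contain no nulls (their atoms use only constants and variables). -/
def Rule.wf (ρ : Rule) : Prop := ∀ t ∈ ρ.terms, ¬ t.isNull

/-- A match of ρ in I is a homomorphism from its body to I. -/
def isMatch (h : Term → Term) (ρ : Rule) (I : Set Atom) : Prop := isHom h ↑ρ.body I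

/-- A match is satisfied if some homomorphism from the head to I agrees with it
on all frontier variables. -/
def satisfiedMatch (h : Term → Term) (ρ : Rule) (I : Set Atom) : Prop :=
  ∃ h', isHom h' ↑ρ.head I ∧ ∀ y ∈ ρ.frontier, h' y = h y

/-- h' extends the match h of ρ on I by mapping the existential variables to
distinct nulls not occurring in I. -/
def extendsMatch (ρ : Rule) (I : Set Atom) (h h' : Term → Term) : Prop :=
  (∀ t, t ∉ ρ.evars → h' t = h t) ∧
  (∀ z ∈ ρ.evars, ∃ n : ℕ, h' z = .null n ∧ Term.null n ∉ termsOf I) ∧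
  (∀ z₁ ∈ ρ.evars, ∀ z₂ ∈ ρ.evars, h' z₁ = h' z₂ → z₁ = z₂)

/-- J is obtained from the interpretation I by applying ρ for the (unsatisfied)
match h extended to h'. -/
def obtainedBy (ρ : Rule) (I : Set Atom) (h h' : Term → Term) (J : Set Atom) : Prop :=
  Interp I ∧ isMatch h ρ I ∧ ¬ satisfiedMatch h ρ I ∧ extendsMatch ρ I h h' ∧
  J = I ∪ mapSet h' ↑ρ.head

/-- The witnesses for ρ₂ positively relying on ρ₁ (Definition 1). -/
def posReliesVia (ρ₁ ρ₂ : Rule) (Ia Ib : Set Atom) (h₁ h₁' h₂ : Term → Term) : Prop :=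
  Ia ⊆ Ib ∧ obtainedBy ρ₁ Ia h₁ h₁' Ib ∧
  isMatch h₂ ρ₂ Ib ∧ ¬ satisfiedMatch h₂ ρ₂ Ib ∧ ¬ isMatch h₂ ρ₂ Ia

/-- ρ₂ positively relies on ρ₁, written ρ₁ ≺⁺ ρ₂. -/
def posRelies (ρ₁ ρ₂ : Rule) : Prop :=
  ∃ Ia Ib h₁ h₁' h₂, posReliesVia ρ₁ ρ₂ Ia Ib h₁ h₁' h₂

/-- hA is an alternative match of the match h (extended to h') of ρ on Ib (Definition 2). -/
def isAltMatch (ρ : Rule) (h h' : Term → Term) (Ib : Set Atom) (hA : Term → Term) : Prop :=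
  isHom hA (mapSet h' ↑ρ.head) Ib ∧
  (∀ t ∈ termsOf (mapSet h ↑ρ.body), hA t = t) ∧
  ∃ n : ℕ, Term.null n ∈ termsOf (mapSet h' ↑ρ.head) ∧
    Term.null n ∉ termsOf (mapSet hA (mapSet h' ↑ρ.head))

/-- The witnesses for ρ₁ restraining ρ₂ (Definition 3). -/
def restrainsVia (ρ₁ ρ₂ : Rule) (Ia Ib : Set Atom)
    (h₁ h₁' h₂ h₂' hA : Term → Term) : Prop :=
  ∃ Ja Jb : Set Atom, Ia ⊆ Ib ∧
    obtainedBy ρ₁ Jb h₁ h₁' Ib ∧ obtainedBy ρ₂ Ja h₂ h₂' Ia ∧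
    isAltMatch ρ₂ h₂ h₂' Ib hA ∧
    ¬ isAltMatch ρ₂ h₂ h₂' (Ib \ mapSet h₁' ↑ρ₁.head) hA

/-- ρ₁ restrains ρ₂, written ρ₁ ≺□ ρ₂. -/
def restrains (ρ₁ ρ₂ : Rule) : Prop :=
  ∃ Ia Ib h₁ h₁' h₂ h₂' hA, restrainsVia ρ₁ ρ₂ Ia Ib h₁ h₁' h₂ h₂' hA

/-- The fixed substitution ω: it maps each variable of Vex to a null and each
variable of Vall to a constant, injectively, fixing everything else, and its
values on Vall ∪ Vex avoid the terms in `fresh`. -/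
def isOmega (ω : Term → Term) (Vall Vex : Set Term) (fresh : Set Term) : Prop :=
  isSubst ω ∧
  (∀ v ∈ Vex, (ω v).isNull) ∧
  (∀ v ∈ Vall, (ω v).isConst) ∧
  (∀ t, t ∉ Vall ∪ Vex → ω t = t) ∧
  (∀ u ∈ Vall ∪ Vex, ∀ v ∈ Vall ∪ Vex, ω u = ω v → u = v) ∧
  (∀ v ∈ Vall ∪ Vex, ω v ∉ fresh)

/-- For a substitution θ, `away θ S` is the substitution that agrees with θ
outside of S and is the identity on S.  Thus θ∀ = `away θ Vex` and
θ∃ = `away θ Vall`. -/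
noncomputable def away (θ : Term → Term) (S : Set Term) : Term → Term :=
  fun t => @ite _ (t ∈ S) (Classical.propDecidable _) t (θ t)

/-- I ⊨ ∃ Z. ψ : there is a homomorphism ψ → I mapping every term of ψ other
than the (existential) variables in Z to itself. -/
def models (I : Set Atom) (ψ : Set Atom) (Z : Set Term) : Prop :=
  ∃ h : Term → Term, (∀ a ∈ ψ, a.map h ∈ I) ∧ ∀ t ∈ termsOf ψ, t ∉ Z → h t = t

/-- No null occurs in the atom set A. -/
def noNullsIn (A : Set Atom) : Prop := ∀ t ∈ termsOf A, ¬ t.isNull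

/-- Lemma 1: if η is an mgu for the atom mapping m whose image is
disjoint from the image of ω, and h is a homomorphism (fixing all constants and
nulls) that is also a unifier for m, then there is a function τ on constants
and nulls such that h(t) = τ(tηω) for every term t on which h is defined. -/
theorem lemma_tau
    (Vall Vex : Set Term) (ω : Term → Term)
    (m : Atom → Option Atom) (η : Term → Term)
    (A I : Set Atom) (h : Term → Term)
    (hω : isOmega ω Vall Vex (termsOf (A ∪ amAtoms m)))
    (hmgu : isMGU η m)
    (him : ∀ s t : Term, η s ≠ s → ω t ≠ t → η s ≠ ω t)
    (hI : Interp I)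
    (hhom : isHom h A I)
    (hsubst : isSubst h)
    (huni : isUnifier h m) :
    ∃ τ : Term → Term,
      (∀ t : Term, ¬ t.isVar → ¬ (τ t).isVar) ∧
      ∀ t ∈ termsOf A, h t = τ (ω (η t)) := by
  classical
  obtain ⟨-, -, -, hout, hinj, hfresh⟩ := hω
  obtain ⟨σ, -, hσ⟩ := hmgu.2 h huni
  have hmem : ∀ t ∈ termsOf A, t ∈ termsOf (A ∪ amAtoms m) := by
    rintro t ⟨a, ha, hta⟩
    exact ⟨a, Or.inl ha, hta⟩
  have hnv : ∀ t ∈ termsOf A, ¬ (h t).isVar := by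
    rintro t ⟨a, ha, hta⟩
    exact hI _ ⟨a.map h, hhom.2 a ha, List.mem_map_of_mem hta⟩
  have aux : ∀ x, ∀ t ∈ termsOf A, ω x = η t → ω x = x := by
    intro x t ht hx
    by_contra hne
    by_cases hη : η t = t
    · have hxV : x ∈ Vall ∪ Vex := by
        by_contra hx'
        exact hne (hout x hx')
      apply hfresh x hxV
      rw [hx, hη]
      exact hmem t ht
    · exact him t x hη hne hx.symm
  have key : ∀ t ∈ termsOf A, ∀ t' ∈ termsOf A, ω (η t) = ω (η t') → η t = η t' := by
    intro t ht t' ht' he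
    by_cases h1 : η t ∈ Vall ∪ Vex
    · by_cases h2 : η t' ∈ Vall ∪ Vex
      · exact hinj _ h1 _ h2 he
      · rw [hout _ h2] at he
        rw [← aux _ t' ht' he, he]
    · rw [hout _ h1] at he
      rw [← aux _ t ht he.symm, he]
  refine ⟨fun x => if hx : ∃ t ∈ termsOf A, ω (η t) = x then h hx.choose else .const 0, ?_, ?_⟩
  · intro x _
    dsimp only
    split_ifs with hx
    · exact hnv _ hx.choose_spec.1
    · exact fun hf => hf
  · intro t ht
    have hx : ∃ t' ∈ termsOf A, ω (η t') = ω (η t) := ⟨t, ht, rfl⟩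
    dsimp only
    rw [dif_pos hx]
    have := key _ hx.choose_spec.1 t ht hx.choose_spec.2
    rw [← hσ t, ← hσ hx.choose, this]
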